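/- arXiv:1404.1182 — 2 statements merged into one kernel-verified Lean document; each statement's English description precedes it below -/
import Mathlib

section
/- There exists n₀ such that for every n ≥ n₀ the following holds: if H is a simple graph on n vertices with no isolated vertices and maximum degree Δ(H) ≤ √n/200, and G is a simple graph on n vertices with at most n − δ(H) − 1 edges, then G and H pack. -/
/-!
Place the few vertices of `G` of large degree first, without creating a conflict, that is, an edge
of `G` placed on an edge of `H`. Extend the placement to a bijection with a minimal set of
conflicts. If a conflict remains, then it has an endpoint `a` outside the initial placement, which
has small degree. Exchanging the images of `a` and some `c` resolves the conflicts at `a` and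
creates no others unless `c` is placed initially, is an `H`-neighbour of `a`, or is joined to `a`
by a path with one edge in `G` and one edge in `H`. So some `c` remains if the `H`-neighbours of
`a` have total `G`-degree at most, say, `9 n / 10`.

* If all degrees of `G` are at most `4 n / 5`, the large vertices are placed greedily on an
  independent set of `H`, never next to a vertex whose neighbours already carry a large total
  degree. By double counting such vertices are few.
* If `v` has degree more than `4 n / 5`, it is placed on a vertex `x` of minimum degree in `H`, and
  the neighbours of `x` receive vertices that form with `v` an independent set of `G`. Such a set
  exists because `G` has at most `n - δ(H) - 1` edges. Then no vertex placed later is next to `x`,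
  and as few edges of `G` avoid `v`, the total degree next to such a vertex is small.
-/

open Finset

section Extension

lemma exists_bijOn_apply_eq {α β : Type*} {s : Finset α} {t : Finset β} (hst : #s = #t) {a : α}
    {b : β} (ha : a ∈ s) (hb : b ∈ t) : ∃ e : α → β, Set.BijOn e s t ∧ e a = b := by
  classical
  have : Nonempty β := ⟨b⟩
  obtain ⟨e, he⟩ := s.finite_toSet.exists_bijOn_of_encard_eq (t := (t : Set β)) (by simp [hst])
  have hswap : Set.BijOn (Equiv.swap (e a) b) t t :=
    Equiv.swap_bijOn_self ⟨fun _ => hb, fun _ => he.mapsTo ha⟩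
  exact ⟨Equiv.swap (e a) b ∘ e, hswap.comp he, Equiv.swap_apply_left _ _⟩

lemma exists_perm_eqOn_of_injOn {α : Type*} [Finite α] {φ : α → α} {s : Set α}
    (hφ : Set.InjOn φ s) : ∃ σ : Equiv.Perm α, Set.EqOn σ φ s := by
  classical
  have := Fintype.ofFinite α
  lift s to Finset α using s.toFinite
  obtain ⟨e, he⟩ := exists_equiv_extend_of_card_eq (t := univ) card_univ.symm
    (subset_univ (s.image φ)) hφ
  exact ⟨e.trans (Equiv.subtypeUnivEquiv mem_univ), he⟩

end Extension

section Degrees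

variable {V : Type*} [Fintype V]

lemma degree_comap_equiv {W : Type*} [Fintype W] (H : SimpleGraph W) [DecidableRel H.Adj]
    (σ : V ≃ W) (a : V) : (H.comap σ).degree a = H.degree (σ a) :=
  ((SimpleGraph.Iso.comap σ H).degree_eq a).symm

lemma exists_isIndepSet_mem_card_eq (G : SimpleGraph V) [DecidableRel G.Adj] (v : V) {k : ℕ}
    (hk : 0 < k) (hcard : #G.edgeFinset + k ≤ Fintype.card V) :
    ∃ Q : Finset V, v ∈ Q ∧ G.IsIndepSet Q ∧ #Q = k := by
  classical
  have hendpoint (e : Sym2 V) : ∃ u, e ∈ G.edgeSet → u ∈ e ∧ u ≠ v := by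
    induction e with | _ a b
    by_cases ha : a = v
    · exact ⟨b, fun hab => ⟨Sym2.mem_mk_right a b, fun hb => hab.ne (ha.trans hb.symm)⟩⟩
    · exact ⟨a, fun _ => ⟨Sym2.mem_mk_left a b, ha⟩⟩
  choose endpoint hmem hne using hendpoint
  let cover : Finset V := G.edgeFinset.image endpoint
  have hindep : G.IsIndepSet (coverᶜ : Finset V) := by
    intro a ha b hb _ hab
    rw [mem_coe, mem_compl] at ha hb
    have hcover : endpoint s(a, b) ∈ cover := mem_image_of_mem _ (by simpa using hab)
    rcases Sym2.mem_iff.1 (hmem _ hab) with h | h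
    · exact ha (h ▸ hcover)
    · exact hb (h ▸ hcover)
  have hv : v ∉ cover := by
    simpa [cover] using hne
  have hcard_cover : #coverᶜ + #G.edgeFinset ≥ Fintype.card V := by
    grw [← card_compl_add_card cover, card_image_le (s := G.edgeFinset) (f := endpoint)]
  obtain ⟨Q, hvQ, hQ, hQcard⟩ := exists_subsuperset_card_eq
    (singleton_subset_iff.2 (mem_compl.2 hv)) (by rwa [card_singleton]) (show k ≤ #coverᶜ by omega)
  exact ⟨Q, singleton_subset_iff.1 hvQ, hindep.mono (coe_subset.2 hQ), hQcard⟩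

lemma sum_degree_add_two_mul_degree_le (G : SimpleGraph V) [DecidableRel G.Adj] {v : V}
    {T : Finset V} (hv : v ∉ T) :
    ∑ a ∈ T, G.degree a + 2 * G.degree v ≤ #T + 2 * #G.edgeFinset := by
  classical
  have hdegree (a) (ha : a ∈ T) : G.degree a ≤ 1 + (G.deleteIncidenceSet v).degree a := by
    have hsubset : G.neighborFinset a ⊆ insert v ((G.deleteIncidenceSet v).neighborFinset a) := by
      intro b hb
      simp only [mem_insert, SimpleGraph.mem_neighborFinset,
        SimpleGraph.deleteIncidenceSet_adj] at hb ⊢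
      grind
    simp only [← SimpleGraph.card_neighborFinset_eq_degree]
    grw [hsubset, card_insert_le, add_comm]
  calc
    ∑ a ∈ T, G.degree a + 2 * G.degree v
      ≤ ∑ a ∈ T, (1 + (G.deleteIncidenceSet v).degree a) + 2 * G.degree v := by
        grw [sum_le_sum hdegree]
    _ ≤ #T + ∑ a, (G.deleteIncidenceSet v).degree a + 2 * G.degree v := by
        rw [sum_add_distrib, sum_const, smul_eq_mul, mul_one]
        gcongr
        exact subset_univ T
    _ = #T + 2 * (#G.edgeFinset - G.degree v + G.degree v) := by
        rw [SimpleGraph.sum_degrees_eq_twice_card_edges,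
          SimpleGraph.card_edgeFinset_deleteIncidenceSet]
        ring
    _ = #T + 2 * #G.edgeFinset := by
        rw [Nat.sub_add_cancel (G.degree_le_card_edgeFinset v)]

/-- The vertices of `G` whose degree exceeds the fraction `1 / c` of the number of vertices. -/
def highDegree (G : SimpleGraph V) [DecidableRel G.Adj] (c : ℕ) : Finset V :=
  {v | Fintype.card V < c * G.degree v}

lemma mul_degree_le_of_notMem_highDegree {G : SimpleGraph V} [DecidableRel G.Adj] {c : ℕ} {v : V}
    (hv : v ∉ highDegree G c) : c * G.degree v ≤ Fintype.card V := by
  simpa [highDegree] using hv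

lemma mul_sum_degree_le_of_disjoint_highDegree {G : SimpleGraph V} [DecidableRel G.Adj] {c : ℕ}
    {T : Finset V} (hT : Disjoint T (highDegree G c)) :
    c * ∑ v ∈ T, G.degree v ≤ #T * Fintype.card V := by
  rw [mul_sum]
  exact sum_le_card_nsmul _ _ _ fun v hv =>
    mul_degree_le_of_notMem_highDegree (disjoint_left.1 hT hv)

lemma card_highDegree_le (G : SimpleGraph V) [DecidableRel G.Adj] (c : ℕ)
    (hG : #G.edgeFinset ≤ Fintype.card V) : #(highDegree G c) ≤ 2 * c := by
  rcases isEmpty_or_nonempty V with hV | hV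
  · simp [eq_empty_of_isEmpty]
  refine le_of_mul_le_mul_right ?_ (Fintype.card_pos (α := V))
  calc
    #(highDegree G c) * Fintype.card V ≤ ∑ v ∈ highDegree G c, c * G.degree v :=
      card_nsmul_le_sum _ _ _ fun v hv => (mem_filter.1 hv).2.le
    _ ≤ ∑ v, c * G.degree v := sum_le_sum_of_subset (subset_univ _)
    _ = c * (2 * #G.edgeFinset) := by rw [← mul_sum, G.sum_degrees_eq_twice_card_edges]
    _ ≤ c * (2 * Fintype.card V) := by gcongr
    _ = 2 * c * Fintype.card V := by ring

end Degrees

section Switching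

variable {V : Type*}

/-- The graphs `G` and `H` pack: some relabelling `σ` of the vertices makes the pullback of `H`
edge-disjoint from `G`. -/
def Packs (G H : SimpleGraph V) : Prop :=
  ∃ σ : Equiv.Perm V, Disjoint G (H.comap σ)

lemma Packs.symm {G H : SimpleGraph V} (h : Packs G H) : Packs H G := by
  obtain ⟨σ, hσ⟩ := h
  refine ⟨σ.symm, SimpleGraph.disjoint_left.2 fun x y hH hG => ?_⟩
  exact SimpleGraph.disjoint_left.1 hσ _ _ hG (by simpa using hH)

lemma packs_bot (G : SimpleGraph V) : Packs G ⊥ :=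
  ⟨Equiv.refl V, SimpleGraph.disjoint_left.2 fun _ _ _ => id⟩

/-- `φ` places the vertices in `P` injectively and maps no edge of `G` inside `P` to an edge
of `H`. Values of `φ` outside `P` are irrelevant. -/
structure IsPartialPacking (G H : SimpleGraph V) (φ : V → V) (P : Finset V) : Prop where
  injOn : Set.InjOn φ P
  not_adj : ∀ a ∈ P, ∀ b ∈ P, G.Adj a b → ¬ H.Adj (φ a) (φ b)

namespace IsPartialPacking

variable {G H : SimpleGraph V} {φ ψ : V → V} {P Q : Finset V}

lemma of_isIndepSet (hP : G.IsIndepSet P) (hφ : Set.InjOn φ P) : IsPartialPacking G H φ P :=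
  ⟨hφ, fun _ ha _ hb hab => absurd hab (hP ha hb hab.ne)⟩

lemma of_pairwise (hφ : (P : Set V).Pairwise fun a b => φ a ≠ φ b ∧ ¬ H.Adj (φ a) (φ b)) :
    IsPartialPacking G H φ P where
  injOn a ha b hb hab := by
    by_contra hne
    exact (hφ ha hb hne).1 hab
  not_adj _ ha _ hb hab := (hφ ha hb hab.ne).2

lemma piecewise [DecidableEq V] (hφ : IsPartialPacking G H φ P) (hψ : IsPartialPacking G H ψ Q)
    (hsep : ∀ a ∈ P, ∀ b ∈ Q, φ a ≠ ψ b ∧ ¬ H.Adj (φ a) (ψ b)) :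
    IsPartialPacking G H (P.piecewise φ ψ) (P ∪ Q) where
  injOn a ha b hb hab := by
    have := @hφ.injOn a
    have := @hψ.injOn a
    grind [Finset.piecewise]
  not_adj a ha b hb hab := by
    have := hφ.not_adj a
    have := hψ.not_adj a
    grind [Finset.piecewise, H.adj_comm]

end IsPartialPacking

lemma inf_comap_swap_lt [DecidableEq V] {G K : SimpleGraph V} {a b c : V}
    (hab : (G ⊓ K).Adj a b) (hac : ¬ K.Adj a c) (hGK : ∀ y, G.Adj a y → ¬ K.Adj y c)
    (hKG : ∀ y, K.Adj a y → ¬ G.Adj y c) :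
    G ⊓ K.comap (Equiv.swap a c) < G ⊓ K := by
  have ha_free : ∀ y, ¬ (G ⊓ K.comap (Equiv.swap a c)).Adj a y := by
    rintro y ⟨hG, hK⟩
    rw [SimpleGraph.comap_adj, Equiv.swap_apply_left] at hK
    grind [K.adj_comm, G.ne_of_adj]
  have hc_free : ∀ y, ¬ (G ⊓ K.comap (Equiv.swap a c)).Adj c y := by
    rintro y ⟨hG, hK⟩
    rw [SimpleGraph.comap_adj, Equiv.swap_apply_right] at hK
    grind [K.adj_comm, G.adj_comm, G.ne_of_adj]
  refine lt_of_le_not_ge (fun p q hpq => ⟨hpq.1, ?_⟩) fun hle => ha_free b (hle hab)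
  have hp : p ≠ a ∧ p ≠ c := ⟨by grind, by grind⟩
  have hq : q ≠ a ∧ q ≠ c :=
    ⟨fun h => ha_free p (h ▸ hpq.symm), fun h => hc_free p (h ▸ hpq.symm)⟩
  simpa [Equiv.swap_apply_of_ne_of_ne, hp, hq] using hpq.2

variable [Fintype V]

lemma exists_switch_vertex (G K : SimpleGraph V) [DecidableRel G.Adj] [DecidableRel K.Adj]
    (P : Finset V) (a : V)
    (hcard : #P + K.degree a + ∑ y ∈ K.neighborFinset a, G.degree y +
      ∑ y ∈ G.neighborFinset a, K.degree y < Fintype.card V) :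
    ∃ c ∉ P, ¬ K.Adj a c ∧ (∀ y, G.Adj a y → ¬ K.Adj y c) ∧ ∀ y, K.Adj a y → ¬ G.Adj y c := by
  classical
  let blocked : Finset V := P ∪ K.neighborFinset a ∪
    (K.neighborFinset a).biUnion (fun y => G.neighborFinset y) ∪
    (G.neighborFinset a).biUnion (fun y => K.neighborFinset y)
  have hblocked : #blocked < #(univ : Finset V) := calc
    #blocked ≤ #P + #(K.neighborFinset a) + ∑ y ∈ K.neighborFinset a, #(G.neighborFinset y) +
        ∑ y ∈ G.neighborFinset a, #(K.neighborFinset y) := by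
      grw [card_union_le, card_union_le, card_union_le, card_biUnion_le, card_biUnion_le]
    _ < #(univ : Finset V) := by
      simpa only [SimpleGraph.card_neighborFinset_eq_degree, card_univ] using hcard
  obtain ⟨c, -, hc⟩ := exists_mem_notMem_of_card_lt_card hblocked
  simp only [blocked, mem_union, mem_biUnion, SimpleGraph.mem_neighborFinset, not_or, not_exists,
    not_and] at hc
  exact ⟨c, hc.1.1.1, hc.1.1.2, hc.2, hc.1.2⟩

theorem IsPartialPacking.packs {G H : SimpleGraph V} [DecidableRel G.Adj] [DecidableRel H.Adj]
    {φ : V → V} {P : Finset V} (hφ : IsPartialPacking G H φ P)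
    (hcard : ∀ σ : Equiv.Perm V, Set.EqOn σ φ P → ∀ a ∉ P,
      #P + H.maxDegree + ∑ y ∈ (H.comap σ).neighborFinset a, G.degree y +
        G.degree a * H.maxDegree < Fintype.card V) :
    Packs G H := by
  classical
  obtain ⟨σ, hmin⟩ := exists_minimalFor_of_wellFoundedLT
    (fun σ : Equiv.Perm V => Set.EqOn σ φ P) (fun σ => G ⊓ H.comap σ)
    (exists_perm_eqOn_of_injOn hφ.injOn)
  have hσ : Set.EqOn σ φ P := hmin.prop
  refine ⟨σ, ?_⟩
  by_contra hconflict
  obtain ⟨a, b, haP, hab⟩ : ∃ a b, a ∉ P ∧ (G ⊓ H.comap σ).Adj a b := by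
    rw [SimpleGraph.disjoint_left] at hconflict
    push Not at hconflict
    obtain ⟨a, b, hG, hH⟩ := hconflict
    by_cases ha : a ∈ P
    · refine ⟨b, a, fun hb => hφ.not_adj a ha b hb hG ?_, hG.symm, hH.symm⟩
      rwa [← hσ ha, ← hσ hb]
    · exact ⟨a, b, ha, hG, hH⟩
  obtain ⟨c, hcP, hac, hGK, hKG⟩ := exists_switch_vertex G (H.comap σ) P a <| by
    simp only [degree_comap_equiv]
    grw [sum_le_card_nsmul _ _ _ fun y _ => H.degree_le_maxDegree (σ y), H.degree_le_maxDegree]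
    simpa using hcard σ hσ a haP
  refine hmin.not_lt (j := (Equiv.swap a c).trans σ) (fun y hy => ?_)
    (inf_comap_swap_lt hab hac hGK hKG)
  rw [Equiv.trans_apply, Equiv.swap_apply_of_ne_of_ne (by grind) (by grind), hσ hy]

end Switching

section Placement

variable {V ι : Type*} (H : SimpleGraph V) [DecidableRel H.Adj] (g : ι → V) (w : ι → ℕ)

/-- The load of `u` under the placement `g` of the weighted set `B`: the total weight placed on the
`H`-neighbours of `u`. -/
def load (B : Finset ι) (u : V) : ℕ :=
  ∑ b ∈ B with H.Adj u (g b), w b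

variable {g} in
lemma load_congr {g' : ι → V} {B : Finset ι} (h : ∀ b ∈ B, g b = g' b) (u : V) :
    load H g w B u = load H g' w B u := by
  simp only [load]
  congr 1
  exact filter_congr fun b hb => by rw [h b hb]

lemma load_insert [DecidableEq ι] {b : ι} {B : Finset ι} (hb : b ∉ B) (u : V) :
    load H g w (insert b B) u = (if H.Adj u (g b) then w b else 0) + load H g w B u := by
  simp only [load, sum_filter, sum_insert hb]

variable [Fintype V]

lemma sum_load (B : Finset ι) : ∑ u, load H g w B u = ∑ b ∈ B, H.degree (g b) * w b := by
  simp only [load, sum_filter]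
  rw [sum_comm]
  refine sum_congr rfl fun b _ => ?_
  simp only [H.adj_comm _ (g b)]
  rw [← sum_filter, sum_const, smul_eq_mul, ← H.neighborFinset_eq_filter,
    H.card_neighborFinset_eq_degree]

lemma sum_neighborFinset_comap_inter_eq_load [DecidableEq V] (w : V → ℕ) (σ : Equiv.Perm V)
    (B : Finset V) (a : V) :
    ∑ b ∈ (H.comap σ).neighborFinset a ∩ B, w b = load H σ w B (σ a) := by
  rw [load]
  congr 1
  ext b
  simp [and_comm]

lemma mul_card_le_load_le (B : Finset ι) (L : ℕ) :
    L * #{u | L ≤ load H g w B u} ≤ H.maxDegree * ∑ b ∈ B, w b := calc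
  L * #{u | L ≤ load H g w B u} ≤ ∑ u with L ≤ load H g w B u, load H g w B u := by
    rw [mul_comm, ← smul_eq_mul]
    exact card_nsmul_le_sum _ _ _ fun u hu => (mem_filter.1 hu).2
  _ ≤ ∑ u, load H g w B u := sum_le_sum_of_subset (subset_univ _)
  _ = ∑ b ∈ B, H.degree (g b) * w b := sum_load H g w B
  _ ≤ H.maxDegree * ∑ b ∈ B, w b := by
    rw [mul_sum]
    gcongr
    exact H.degree_le_maxDegree _

lemma exists_vertex_adj_load_lt (F : Finset V) (B : Finset ι) (L : ℕ)
    (hcard : L * (#F + #B * (H.maxDegree + 1)) + H.maxDegree ^ 2 * ∑ b ∈ B, w b <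
      L * Fintype.card V) :
    ∃ c ∉ F, (∀ b ∈ B, c ≠ g b ∧ ¬ H.Adj (g b) c) ∧ ∀ u, H.Adj u c → load H g w B u < L := by
  classical
  let heavy : Finset V := {u | L ≤ load H g w B u}
  let blocked : Finset V := F ∪ B.biUnion (fun b => insert (g b) (H.neighborFinset (g b))) ∪
    heavy.biUnion (fun u => H.neighborFinset u)
  have hdeg (u : V) : #(H.neighborFinset u) ≤ H.maxDegree := by
    simpa using H.degree_le_maxDegree u
  have hcard_blocked : #blocked ≤ #F + #B * (H.maxDegree + 1) + #heavy * H.maxDegree := by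
    grw [card_union_le, card_union_le, card_biUnion_le_card_mul heavy _ _ fun u _ => hdeg u,
      card_biUnion_le_card_mul B _ _ fun b _ => (card_insert_le _ _).trans
        (Nat.add_le_add_right (hdeg (g b)) 1)]
  have hblocked : #blocked < #(univ : Finset V) := by
    refine lt_of_mul_lt_mul_left (a := L) ?_ L.zero_le
    calc
      L * #blocked ≤ L * (#F + #B * (H.maxDegree + 1)) + H.maxDegree * (L * #heavy) := by
        grw [hcard_blocked]
        exact le_of_eq (by ring)
      _ ≤ L * (#F + #B * (H.maxDegree + 1)) + H.maxDegree * (H.maxDegree * ∑ b ∈ B, w b) := by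
        grw [mul_card_le_load_le]
      _ < L * #(univ : Finset V) := by
        rwa [← mul_assoc, ← sq, card_univ]
  obtain ⟨c, -, hc⟩ := exists_mem_notMem_of_card_lt_card hblocked
  simp only [blocked, heavy, mem_union, mem_biUnion, mem_insert, mem_filter_univ,
    SimpleGraph.mem_neighborFinset, not_or, not_exists, not_and] at hc
  refine ⟨c, hc.1.1, hc.1.2, fun u hu => ?_⟩
  by_contra! hL
  exact hc.2 u hL hu

/- Since no vertex is ever placed next to a vertex of load at least `L`, only loads below `L` grow,
each time by at most `D`. -/
theorem exists_independent_placement_load_le (F : Finset V) (B : Finset ι) (L D : ℕ)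
    (hD : ∀ b ∈ B, w b ≤ D)
    (hcard : L * (#F + #B * (H.maxDegree + 1)) + H.maxDegree ^ 2 * ∑ b ∈ B, w b <
      L * Fintype.card V) :
    ∃ g : ι → V, (∀ b ∈ B, g b ∉ F) ∧
      (B : Set ι).Pairwise (fun a b => g a ≠ g b ∧ ¬ H.Adj (g a) (g b)) ∧
      ∀ u, load H g w B u ≤ L + D := by
  classical
  induction B using Finset.induction_on with
  | empty =>
    have hV : 0 < Fintype.card V := Nat.pos_of_mul_pos_left (Nat.zero_lt_of_lt hcard)
    have : Nonempty V := Fintype.card_pos_iff.1 hV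
    exact ⟨fun _ => Classical.arbitrary V, by simp [load]⟩
  | insert b B hb ih =>
    have hcard' : L * (#F + #B * (H.maxDegree + 1)) + H.maxDegree ^ 2 * ∑ b ∈ B, w b <
        L * Fintype.card V := by
      refine lt_of_le_of_lt ?_ hcard
      gcongr <;> exact subset_insert b B
    obtain ⟨g, hF, hpair, hload⟩ := ih (fun a ha => hD a (mem_insert_of_mem ha)) hcard'
    obtain ⟨c, hcF, hcB, hcload⟩ := exists_vertex_adj_load_lt H g w F B L hcard'
    have hg (a) (ha : a ∈ B) : Function.update g b c a = g a :=
      Function.update_of_ne (ne_of_mem_of_not_mem ha hb) _ _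
    refine ⟨Function.update g b c, ?_, ?_, fun u => ?_⟩
    · simp only [mem_insert, forall_eq_or_imp, Function.update_self]
      exact ⟨hcF, fun a ha => by rw [hg a ha]; exact hF a ha⟩
    · rw [coe_insert, Set.pairwise_insert]
      refine ⟨fun a ha a' ha' hne => ?_, fun a ha _ => ?_⟩
      · simpa only [hg a ha, hg a' ha'] using hpair ha ha' hne
      · rw [hg a ha, Function.update_self]
        obtain ⟨hne, hnadj⟩ := hcB a ha
        exact ⟨⟨hne, fun hadj => hnadj hadj.symm⟩, hne.symm, hnadj⟩
    · rw [load_insert H _ w hb, load_congr H w hg, Function.update_self]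
      split_ifs with hu
      · rw [add_comm]
        exact add_le_add (hcload u hu).le (hD b (mem_insert_self b B))
      · simpa using hload u

end Placement

section Cases

variable {V : Type*} [Fintype V] {G H : SimpleGraph V} [DecidableRel G.Adj] [DecidableRel H.Adj]

theorem packs_of_forall_five_mul_degree_le (hpos : 0 < H.maxDegree)
    (hH : 40000 * H.maxDegree ^ 2 ≤ Fintype.card V) (hG : #G.edgeFinset ≤ Fintype.card V)
    (hdeg : ∀ v, 5 * G.degree v ≤ 4 * Fintype.card V) : Packs G H := by
  classical
  set Δ := H.maxDegree with hΔ
  set n := Fintype.card V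
  set B := highDegree G (100 * Δ)
  have hB : #B ≤ 2 * (100 * Δ) := card_highDegree_le G _ hG
  have hΔsq : Δ ≤ Δ ^ 2 := Nat.le_self_pow two_ne_zero Δ
  have hweight : ∑ b ∈ B, G.degree b ≤ 2 * n := by
    grw [subset_univ B, G.sum_degrees_eq_twice_card_edges, hG]
  obtain ⟨g, -, hpair, hload⟩ := exists_independent_placement_load_le H (fun b => G.degree b)
    ∅ B (4000 * Δ ^ 2) (4 * n / 5) (fun b _ => by have := hdeg b; omega) <| by
      rw [card_empty, zero_add]
      grw [← hΔ, hB, hweight]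
      have hfactor : 4000 * (2 * (100 * Δ) * (Δ + 1)) + 2 * n < 4000 * n := by linarith
      calc
        _ = Δ ^ 2 * (4000 * (2 * (100 * Δ) * (Δ + 1)) + 2 * n) := by ring
        _ < Δ ^ 2 * (4000 * n) := Nat.mul_lt_mul_of_pos_left hfactor (by positivity)
        _ = 4000 * Δ ^ 2 * n := by ring
  refine (IsPartialPacking.of_pairwise hpair).packs fun σ hσ a ha => ?_
  have ha_light : 100 * Δ * G.degree a ≤ n := mul_degree_le_of_notMem_highDegree ha
  set N := (H.comap σ).neighborFinset a with hN
  have hNcard : #N ≤ Δ := by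
    rw [hN, SimpleGraph.card_neighborFinset_eq_degree, degree_comap_equiv]
    exact H.degree_le_maxDegree _
  have hheavy : ∑ b ∈ N ∩ B, G.degree b ≤ 4000 * Δ ^ 2 + 4 * n / 5 := by
    rw [hN, sum_neighborFinset_comap_inter_eq_load, load_congr H _ hσ]
    exact hload (σ a)
  have hlight : Δ * (100 * ∑ b ∈ N \ B, G.degree b) ≤ Δ * n := by
    grw [← hNcard, ← card_le_card (sdiff_subset : N \ B ⊆ N),
      ← mul_sum_degree_le_of_disjoint_highDegree (c := 100 * Δ) sdiff_disjoint]
    exact le_of_eq (by ring)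
  have hlight' := le_of_mul_le_mul_left hlight hpos
  rw [← sum_inter_add_sum_sdiff N B]
  have := Nat.mul_div_le (4 * n) 5
  linarith

lemma exists_isPartialPacking_closedNeighborhood (v x : V)
    (hG : #G.edgeFinset + (H.degree x + 1) ≤ Fintype.card V) :
    ∃ (e : V → V) (Q : Finset V), IsPartialPacking G H e Q ∧ v ∈ Q ∧ e v = x ∧
      #Q = H.degree x + 1 ∧ Set.BijOn e Q (insert x (H.neighborSet x)) := by
  classical
  obtain ⟨Q, hvQ, hQ, hQcard⟩ := exists_isIndepSet_mem_card_eq G v (Nat.succ_pos _) hG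
  obtain ⟨e, he, hev⟩ := exists_bijOn_apply_eq (t := insert x (H.neighborFinset x))
    (by rw [hQcard, card_insert_of_notMem (by simp), H.card_neighborFinset_eq_degree]) hvQ
    (mem_insert_self x _)
  exact ⟨e, Q, .of_isIndepSet hQ he.injOn, hvQ, hev, hQcard, by simpa using he⟩

lemma exists_isPartialPacking_closedNeighborhood_superset (v x : V) (B : Finset V)
    (hG : #G.edgeFinset + (H.degree x + 1) ≤ Fintype.card V)
    (hB : (H.maxDegree + 1 + #B) * (H.maxDegree + 1) < Fintype.card V) :
    ∃ (φ : V → V) (P : Finset V), IsPartialPacking G H φ P ∧ B ⊆ P ∧ v ∈ P ∧ φ v = x ∧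
      #P ≤ H.maxDegree + 1 + #B ∧ Set.SurjOn φ P (H.neighborSet x) := by
  classical
  obtain ⟨e, Q, hQ, hvQ, hev, hQcard, he⟩ := exists_isPartialPacking_closedNeighborhood v x hG
  let F : Finset V := (insert x (H.neighborFinset x)).biUnion fun y => insert y (H.neighborFinset y)
  have hclosed (y : V) : #(insert y (H.neighborFinset y)) ≤ H.maxDegree + 1 := by
    grw [card_insert_le, H.card_neighborFinset_eq_degree, H.degree_le_maxDegree]
  have hF : #F ≤ (H.maxDegree + 1) * (H.maxDegree + 1) := by
    grw [card_biUnion_le_card_mul _ _ _ fun y _ => hclosed y, hclosed]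
  obtain ⟨g, hgF, hpair, -⟩ := exists_independent_placement_load_le H 0 F B 1 0 (by simp) <| by
    grw [hF]
    simpa [add_mul] using hB
  have hsep : ∀ a ∈ Q, ∀ b ∈ B, e a ≠ g b ∧ ¬ H.Adj (e a) (g b) := by
    intro a ha b hb
    have hea : e a ∈ insert x (H.neighborFinset x) := by simpa using he.mapsTo ha
    have hgb := hgF b hb
    simp only [F, mem_biUnion, not_exists, not_and] at hgb
    simpa [eq_comm] using hgb (e a) hea
  refine ⟨Q.piecewise e g, Q ∪ B, hQ.piecewise (.of_pairwise hpair) hsep, subset_union_right,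
    mem_union_left B hvQ, ?_, ?_, ?_⟩
  · rw [piecewise_eq_of_mem _ _ _ hvQ, hev]
  · grw [card_union_le, hQcard, H.degree_le_maxDegree]
  · have hsurj := he.surjOn.mono (Set.Subset.refl _) (Set.subset_insert x _)
    refine (hsurj.congr fun a ha => ?_).mono (coe_subset.2 subset_union_left) (Set.Subset.refl _)
    rw [piecewise_eq_of_mem _ _ _ ha]

theorem packs_of_lt_five_mul_degree (hpos : 0 < H.maxDegree)
    (hH : 40000 * H.maxDegree ^ 2 ≤ Fintype.card V) {v x : V}
    (hG : #G.edgeFinset + (H.degree x + 1) ≤ Fintype.card V)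
    (hv : 4 * Fintype.card V < 5 * G.degree v) : Packs G H := by
  set Δ := H.maxDegree
  set n := Fintype.card V
  set B := highDegree G (100 * Δ)
  have hB : #B ≤ 2 * (100 * Δ) := card_highDegree_le G _ (by omega)
  have hΔsq : Δ ≤ Δ ^ 2 := Nat.le_self_pow two_ne_zero Δ
  obtain ⟨φ, P, hφ, hBP, hvP, hφv, hPcard, hsurj⟩ :=
    exists_isPartialPacking_closedNeighborhood_superset (H := H) v x B hG <| by
      grw [hB]
      linarith
  refine hφ.packs fun σ hσ a ha => ?_
  have ha_light : 100 * Δ * G.degree a ≤ n :=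
    mul_degree_le_of_notMem_highDegree fun haB => ha (hBP haB)
  have hvN : v ∉ (H.comap σ).neighborFinset a := by
    rw [SimpleGraph.mem_neighborFinset, SimpleGraph.comap_adj, hσ hvP, hφv]
    intro hadj
    obtain ⟨q, hq, hqa⟩ := hsurj hadj.symm
    exact ha (σ.injective ((hσ hq).trans hqa) ▸ hq)
  have hload := sum_degree_add_two_mul_degree_le G hvN
  grw [SimpleGraph.card_neighborFinset_eq_degree, degree_comap_equiv, H.degree_le_maxDegree]
    at hload
  linarith

end Cases

theorem sparse_graph_packs_with_few_edges_general {V : Type*} [Fintype V] (H : SimpleGraph V)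
    [DecidableRel H.Adj] (G : SimpleGraph V)
    (hH : (H.maxDegree : ℝ) ≤ Real.sqrt (Fintype.card V) / 200)
    (hG : G.edgeSet.ncard ≤ Fintype.card V - H.minDegree - 1) : Packs G H := by
  classical
  rcases H.maxDegree.eq_zero_or_pos with hzero | hpos
  · rw [SimpleGraph.maxDegree_eq_zero_iff.1 hzero]
    exact packs_bot G
  have hΔ : 40000 * H.maxDegree ^ 2 ≤ Fintype.card V := by
    have h : ((200 * H.maxDegree : ℝ)) ^ 2 ≤ Fintype.card V :=
      Real.le_sqrt' (by positivity) |>.1 (by linarith)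
    rw [mul_pow] at h
    norm_num at h
    exact_mod_cast h
  have : Nonempty V := Fintype.card_pos_iff.1 (hΔ.trans_lt' (by positivity))
  obtain ⟨x, hx⟩ := H.exists_minimal_degree_vertex
  have hedges : #G.edgeFinset + (H.degree x + 1) ≤ Fintype.card V := by
    rw [Set.ncard_eq_toFinset_card', ← SimpleGraph.edgeFinset, hx] at hG
    have := H.degree_lt_card_verts x
    omega
  by_cases hdeg : ∀ v, 5 * G.degree v ≤ 4 * Fintype.card V
  · exact packs_of_forall_five_mul_degree_le hpos hΔ (by omega) hdeg
  · push Not at hdeg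
    obtain ⟨v, hv⟩ := hdeg
    exact packs_of_lt_five_mul_degree hpos hΔ hedges hv

theorem sparse_graph_packs_with_few_edges :
    ∃ n₀ : ℕ, ∀ n : ℕ, n₀ ≤ n →
      ∀ (H : SimpleGraph (Fin n)) [DecidableRel H.Adj] (G : SimpleGraph (Fin n)),
        (∀ v : Fin n, 0 < H.degree v) →
        (H.maxDegree : ℝ) ≤ Real.sqrt n / 200 →
        G.edgeSet.ncard ≤ n - H.minDegree - 1 →
        ∃ f : Fin n → Fin n, Function.Bijective f ∧
          ∀ u v : Fin n, H.Adj u v → ¬ G.Adj (f u) (f v) := by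
  refine ⟨0, fun n _ H _ G _ hH hG => ?_⟩
  obtain ⟨σ, hσ⟩ :=
    (sparse_graph_packs_with_few_edges_general H G (by simpa using hH) (by simpa using hG)).symm
  exact ⟨σ, σ.bijective, SimpleGraph.disjoint_left.1 hσ⟩
end

section
/- There exists n₀ such that for every n ≥ n₀ the following holds: let 1 ≤ δ ≤ √n/200, let G be a simple graph on n vertices with exactly n − δ − 1 edges, let v_1, …, v_n be an ordering of its vertices with d(v_1) ≥ d(v_2) ≥ … ≥ d(v_n), and suppose that for each i with 2 ≤ i ≤ n we are given an independent set S_i of G, disjoint from N[v_i], with |S_i| ≥ n/18 and with every vertex of S_i of degree at most 10 in G. Then there exist sets B_i ⊆ S_i for 2 ≤ i ≤ n such that: (1) for every i with 2 ≤ i ≤ n, |N(v_i) ∩ (B_2 ∪ … ∪ B_{i−1})| ≤ 4√n; and (2) for every i with 2 ≤ i ≤ ⌈√n/10⌉, |B_i \ (N[B_2] ∪ … ∪ N[B_{i−1}])| ≥ √n/50. -/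
/-!
If `B_i` consisted of `⌈√n / 50⌉` uniformly random vertices of `S_i` for each `i` up to `√n / 10`,
then `N(v_i)` would be hit by at most about `√n` earlier choices on average, because the ordering
by degree forces `d(v_i) ≤ 2n / i`, and a Chernoff bound would give (1). We derandomize: vertices
are chosen one at a time, keeping bounded the sum over `i` of `2 ^ (number of hits of N(v_i))`,
scaled down by its expected growth. Each choice avoids the closed neighborhoods of all the others
made so far, which leaves at least `n / 40` candidates since degrees in `S_i` are at most `10`. The
selected vertices are then distinct and independent, so nothing is removed from `B_i` in (2).
-/

/-- The closed neighborhood `N[A]` of a finite set `A` of vertices. -/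
def closedNbhd {n : ℕ} (G : SimpleGraph (Fin n)) [DecidableRel G.Adj]
    (A : Finset (Fin n)) : Finset (Fin n) :=
  A ∪ A.biUnion (fun a => G.neighborFinset a)

open Finset

section Potential

variable {α τ : Type*}

theorem exists_mem_sum_mul_le_sum {ι : Type*} [Fintype ι] {A : Finset α} (hA : A.Nonempty)
    {w : ι → ℝ} {f : ι → α → ℝ} (hw : ∀ i, 0 ≤ w i) (hf : ∀ i, ∑ y ∈ A, f i y ≤ #A) :
    ∃ y ∈ A, ∑ i, w i * f i y ≤ ∑ i, w i := by
  refine exists_le_of_sum_le hA ?_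
  calc ∑ y ∈ A, ∑ i, w i * f i y = ∑ i, w i * ∑ y ∈ A, f i y := by
        rw [sum_comm]
        simp only [mul_sum]
    _ ≤ ∑ i, w i * #A := sum_le_sum fun i _ => mul_le_mul_of_nonneg_left (hf i) (hw i)
    _ = ∑ _y ∈ A, ∑ i, w i := by rw [← sum_mul, sum_const, nsmul_eq_mul, mul_comm]

variable [DecidableEq α]

/-- The factor by which choosing `y` changes the potential that controls how often `N` is hit.
A hit doubles the potential, and `exp (-#N / a)` makes up for the average gain when `y` is chosen
uniformly from at least `a` elements. -/
noncomputable def hitWeight (N : Finset α) (a : ℝ) (y : α) : ℝ :=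
  (if y ∈ N then 2 else 1) * Real.exp (-(#N / a))

theorem hitWeight_nonneg (N : Finset α) (a : ℝ) (y : α) : 0 ≤ hitWeight N a y := by
  unfold hitWeight
  positivity

theorem sum_hitWeight_le_card {A N : Finset α} {a : ℝ} (ha : 0 < a) (hA : a ≤ #A) :
    ∑ y ∈ A, hitWeight N a y ≤ #A := by
  have sum_eq : ∑ y ∈ A, (if y ∈ N then (2 : ℝ) else 1) = #A + #(A ∩ N) := by
    have split (y : α) : (if y ∈ N then (2 : ℝ) else 1) = 1 + if y ∈ N then 1 else 0 := by
      split_ifs <;> norm_num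
    simp only [split, sum_add_distrib, sum_boole, filter_mem_eq_inter, sum_const, nsmul_one]
  have inter_le : (#(A ∩ N) : ℝ) ≤ #A * (#N / a) :=
    calc (#(A ∩ N) : ℝ) ≤ #N := by gcongr; exact inter_subset_right
      _ = a * (#N / a) := (mul_div_cancel₀ _ ha.ne').symm
      _ ≤ #A * (#N / a) := by gcongr
  calc ∑ y ∈ A, hitWeight N a y = (#A + #(A ∩ N)) * Real.exp (-(#N / a)) := by
        simp only [hitWeight, ← sum_mul, sum_eq]
    _ ≤ #A * (#N / a + 1) * Real.exp (-(#N / a)) := by gcongr; linarith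
    _ ≤ #A * Real.exp (#N / a) * Real.exp (-(#N / a)) := by gcongr; exact Real.add_one_le_exp _
    _ = #A := by rw [mul_assoc, ← Real.exp_add, add_neg_cancel, Real.exp_zero, mul_one]

theorem prod_hitWeight (N : Finset α) (a : ℝ) (T : Finset τ) (x : τ → α) :
    ∏ t ∈ T, hitWeight N a (x t) =
      2 ^ #{t ∈ T | x t ∈ N} * Real.exp (-(#T * (#N / a))) := by
  simp only [hitWeight, prod_mul_distrib, ← prod_filter, prod_const, ← Real.exp_nat_mul, mul_neg]

end Potential

section Blocks

variable {V ι : Type*} [DecidableEq V] [DecidableEq ι] {m : ℕ}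

/-- The block `B_i` of a selection `x` of `m` elements for each index in `I`: the elements selected
for `i`. It is empty when `i ∉ I`, since `x` then carries no information. -/
def block (I : Finset ι) (x : ι × Fin m → V) (i : ι) : Finset V :=
  if i ∈ I then univ.image fun s => x (i, s) else ∅

theorem mem_block {I : Finset ι} {x : ι × Fin m → V} {i : ι} {u : V} :
    u ∈ block I x i ↔ i ∈ I ∧ ∃ s, x (i, s) = u := by
  unfold block
  split_ifs with hi <;> simp [hi]

theorem card_block {I : Finset ι} {x : ι × Fin m → V}
    (hinj : Set.InjOn x ↑(I ×ˢ (univ : Finset (Fin m)))) {i : ι} (hi : i ∈ I) :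
    #(block I x i) = m := by
  have inj_fiber : Function.Injective fun s => x (i, s) := fun s s' h =>
    congrArg Prod.snd (hinj (by simpa using hi) (by simpa using hi) h)
  rw [block, if_pos hi, card_image_of_injective _ inj_fiber, card_univ, Fintype.card_fin]

theorem pairwise_disjoint_block {I : Finset ι} {x : ι × Fin m → V}
    (hinj : Set.InjOn x ↑(I ×ˢ (univ : Finset (Fin m)))) :
    Pairwise (Function.onFun Disjoint (block I x)) := by
  refine fun i j hij => disjoint_left.2 fun u hui huj => hij ?_
  obtain ⟨hi, s, rfl⟩ := mem_block.1 hui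
  obtain ⟨hj, t, hts⟩ := mem_block.1 huj
  exact congrArg Prod.fst (hinj (by simpa using hi) (by simpa using hj) hts.symm)

theorem iUnion_block_subset (I : Finset ι) (x : ι × Fin m → V) :
    ⋃ i, (block I x i : Set V) ⊆ x '' ↑(I ×ˢ (univ : Finset (Fin m))) := by
  refine Set.iUnion_subset fun i u hu => ?_
  obtain ⟨hi, s, rfl⟩ := mem_block.1 hu
  exact Set.mem_image_of_mem x (by simpa using hi)

theorem card_inter_biUnion_block_le (I : Finset ι) (x : ι × Fin m → V) (J : Finset ι)
    (N : Finset V) :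
    #(N ∩ J.biUnion (block I x)) ≤ #{t ∈ (I ×ˢ univ) ∩ (J ×ˢ univ) | x t ∈ N} := by
  refine (card_le_card fun u hu => ?_).trans (card_image_le (f := x))
  obtain ⟨huN, huB⟩ := mem_inter.1 hu
  obtain ⟨i, hiJ, hui⟩ := mem_biUnion.1 huB
  obtain ⟨hiI, s, rfl⟩ := mem_block.1 hui
  exact mem_image_of_mem x (by simp [hiI, hiJ, huN])

end Blocks

section Selection

variable {V τ ι κ : Type*} [Fintype κ] (G : SimpleGraph V) [G.LocallyFinite]

theorem card_le_card_sdiff_closedNeighborhoods_add [DecidableEq V] {d : ℕ} {T : Finset τ}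
    {x : τ → V} (hdeg : ∀ t ∈ T, G.degree (x t) ≤ d) (F : Finset V) :
    #F ≤ #(F \ T.biUnion fun t => insert (x t) (G.neighborFinset (x t))) + (d + 1) * #T := by
  have card_union : #(T.biUnion fun t => insert (x t) (G.neighborFinset (x t))) ≤ #T * (d + 1) :=
    card_biUnion_le_card_mul _ _ _ fun t ht =>
      (card_insert_le _ _).trans (Nat.succ_le_succ (hdeg t ht))
  rw [mul_comm]
  exact card_le_card_sdiff_add_card.trans (by gcongr)

variable {G} in
theorem injOn_and_isIndepSet_update [DecidableEq V] [DecidableEq τ] {T : Finset τ} {t : τ}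
    (ht : t ∉ T) {x : τ → V} (hinj : Set.InjOn x T) (hindep : G.IsIndepSet (x '' T))
    {y : V} (hy : y ∉ T.biUnion fun s => insert (x s) (G.neighborFinset (x s))) :
    Set.InjOn (Function.update x t y) ↑(insert t T) ∧
      G.IsIndepSet (Function.update x t y '' ↑(insert t T)) := by
  have eqOn : Set.EqOn (Function.update x t y) x T := fun s hs =>
    Function.update_of_ne (ne_of_mem_of_not_mem hs ht) _ _
  simp only [mem_biUnion, mem_insert, SimpleGraph.mem_neighborFinset, not_exists, not_and,
    not_or] at hy
  rw [coe_insert, Set.injOn_insert (mod_cast ht), Set.image_insert_eq, Function.update_self,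
    eqOn.image_eq]
  have : Std.Symm fun u w => ¬ G.Adj u w := ⟨fun _ _ h h' => h h'.symm⟩
  refine ⟨⟨hinj.congr eqOn.symm, ?_⟩, Set.Pairwise.insert_of_symm hindep ?_⟩
  · rintro ⟨s, hs, rfl⟩
    exact (hy s hs).1 rfl
  · rintro _ ⟨s, hs, rfl⟩ - h
    exact (hy s hs).2 h.symm

theorem exists_indep_choice_sum_prod_le_card [Nonempty V] {d : ℕ} {a : ℝ} (ha : 0 < a)
    {T : Finset τ} {F : τ → Finset V} {f : τ → κ → V → ℝ}
    (hdeg : ∀ t ∈ T, ∀ u ∈ F t, G.degree u ≤ d) (hF : ∀ t ∈ T, a + (d + 1) * #T ≤ #(F t))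
    (hf : ∀ t k u, 0 ≤ f t k u)
    (havg : ∀ t ∈ T, ∀ A ⊆ F t, a ≤ #A → ∀ k, ∑ u ∈ A, f t k u ≤ #A) :
    ∃ x : τ → V, (∀ t ∈ T, x t ∈ F t) ∧ Set.InjOn x T ∧ G.IsIndepSet (x '' T) ∧
      ∑ k, ∏ t ∈ T, f t k (x t) ≤ Fintype.card κ := by
  classical
  induction T using Finset.induction_on with
  | empty => exact ⟨fun _ => Classical.arbitrary V, by simp⟩
  | insert t T ht ih =>
    rw [forall_mem_insert] at hdeg hF havg
    have card_insert : (#(insert t T) : ℝ) = #T + 1 := by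
      rw [card_insert_of_notMem ht, Nat.cast_succ]
    rw [card_insert] at hF
    obtain ⟨x, hxF, hinj, hindep, hsum⟩ := ih hdeg.2
      (fun s hs => le_trans (by gcongr; linarith) (hF.2 s hs)) havg.2
    set A := F t \ T.biUnion fun s => insert (x s) (G.neighborFinset (x s))
    have le_card_A : a ≤ #A := by
      have h : (#(F t) : ℝ) ≤ #A + (d + 1) * #T := mod_cast
        card_le_card_sdiff_closedNeighborhoods_add G (fun s hs => hdeg.2 s hs _ (hxF s hs)) (F t)
      linarith [hF.1, (by positivity : (0 : ℝ) ≤ d)]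
    have A_nonempty : A.Nonempty := card_pos.1 (mod_cast ha.trans_le le_card_A)
    obtain ⟨y, hyA, hy⟩ := exists_mem_sum_mul_le_sum A_nonempty
      (fun k => prod_nonneg fun s (_ : s ∈ T) => hf s k (x s))
      (havg.1 A sdiff_subset le_card_A)
    rw [mem_sdiff] at hyA
    obtain ⟨hinj', hindep'⟩ := injOn_and_isIndepSet_update ht hinj hindep hyA.2
    have update_eq : ∀ s ∈ T, Function.update x t y s = x s := fun s hs =>
      Function.update_of_ne (ne_of_mem_of_not_mem hs ht) _ _
    refine ⟨Function.update x t y, ?_, hinj', hindep', ?_⟩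
    · rw [forall_mem_insert, Function.update_self]
      exact ⟨hyA.1, fun s hs => (update_eq s hs).symm ▸ hxF s hs⟩
    · refine le_of_eq_of_le (sum_congr rfl fun k _ => ?_) (hy.trans hsum)
      rw [prod_insert ht, Function.update_self, mul_comm]
      exact congrArg (· * _) (prod_congr rfl fun s hs => by rw [update_eq s hs])

theorem exists_indep_choice_two_pow_card_hits_le [Nonempty V] [DecidableEq V] [DecidableEq τ]
    {d : ℕ} {a : ℝ} (ha : 0 < a) {T : Finset τ} {F : τ → Finset V}
    (hdeg : ∀ t ∈ T, ∀ u ∈ F t, G.degree u ≤ d) (hF : ∀ t ∈ T, a + (d + 1) * #T ≤ #(F t))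
    (P : κ → Finset τ) (N : κ → Finset V) :
    ∃ x : τ → V, (∀ t ∈ T, x t ∈ F t) ∧ Set.InjOn x T ∧ G.IsIndepSet (x '' T) ∧
      ∀ k, (2 : ℝ) ^ #{t ∈ T ∩ P k | x t ∈ N k} ≤
        Fintype.card κ * Real.exp (#(T ∩ P k) * (#(N k) / a)) := by
  have weight_nonneg (t : τ) (k : κ) (u : V) :
      0 ≤ if t ∈ P k then hitWeight (N k) a u else 1 := by
    split_ifs
    exacts [hitWeight_nonneg _ _ _, zero_le_one]
  obtain ⟨x, hxF, hinj, hindep, hsum⟩ := exists_indep_choice_sum_prod_le_card G ha hdeg hF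
    weight_nonneg fun t _ A _ hA k => by
      split_ifs
      exacts [sum_hitWeight_le_card ha hA, by simp]
  refine ⟨x, hxF, hinj, hindep, fun k => ?_⟩
  have hk := (single_le_sum (fun k _ => prod_nonneg fun t _ => weight_nonneg t k (x t))
    (mem_univ k)).trans hsum
  rwa [prod_ite_mem, prod_hitWeight, Real.exp_neg, ← div_eq_mul_inv,
    div_le_iff₀ (Real.exp_pos _)] at hk

theorem exists_indep_blocks_two_pow_card_inter_le [Nonempty V] [DecidableEq V] [DecidableEq ι]
    {d m : ℕ} {a : ℝ} (ha : 0 < a) {I : Finset ι} {S : ι → Finset V}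
    (hdeg : ∀ i ∈ I, ∀ u ∈ S i, G.degree u ≤ d)
    (hS : ∀ i ∈ I, a + (d + 1) * (#I * m) ≤ #(S i)) (J : κ → Finset ι) (N : κ → Finset V) :
    ∃ B : ι → Finset V, (∀ i, B i ⊆ S i) ∧ (∀ i ∈ I, #(B i) = m) ∧
      Pairwise (Function.onFun Disjoint B) ∧ G.IsIndepSet (⋃ i, (B i : Set V)) ∧
      ∀ k, (2 : ℝ) ^ #(N k ∩ (J k).biUnion B) ≤
        Fintype.card κ * Real.exp (#(I ∩ J k) * m * (#(N k) / a)) := by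
  let T : Finset (ι × Fin m) := I ×ˢ univ
  have mem_I {t : ι × Fin m} (ht : t ∈ T) : t.1 ∈ I := (mem_product.1 ht).1
  have card_T : (#T : ℝ) = #I * m := by simp [T]
  obtain ⟨x, hxS, hinj, hindep, hhits⟩ := exists_indep_choice_two_pow_card_hits_le G ha
    (fun t ht => hdeg t.1 (mem_I ht)) (fun t ht => card_T ▸ hS t.1 (mem_I ht))
    (fun k => J k ×ˢ univ) N
  refine ⟨block I x, fun i u hu => ?_, fun i hi => card_block hinj hi,
    pairwise_disjoint_block hinj, hindep.mono (iUnion_block_subset I x), fun k => ?_⟩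
  · obtain ⟨hi, s, rfl⟩ := mem_block.1 hu
    exact hxS (i, s) (mem_product.2 ⟨hi, mem_univ s⟩)
  · have card_watched : (#(T ∩ J k ×ˢ univ) : ℝ) = #(I ∩ J k) * m := by
      simp [T, product_inter_product]
    calc (2 : ℝ) ^ #(N k ∩ (J k).biUnion (block I x))
        ≤ 2 ^ #{t ∈ T ∩ J k ×ˢ univ | x t ∈ N k} :=
          pow_le_pow_right₀ one_le_two (card_inter_biUnion_block_le I x (J k) (N k))
      _ ≤ Fintype.card κ * Real.exp (#(I ∩ J k) * m * (#(N k) / a)) := card_watched ▸ hhits k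

end Selection

theorem succ_mul_degree_le_two_mul_card_edgeFinset {V : Type*} [Fintype V] (G : SimpleGraph V)
    [DecidableRel G.Adj] {n : ℕ} {v : Fin n → V} (hv : Function.Injective v)
    (hanti : Antitone fun i => G.degree (v i)) (i : Fin n) :
    ((i : ℕ) + 1) * G.degree (v i) ≤ 2 * #G.edgeFinset := by
  classical
  calc ((i : ℕ) + 1) * G.degree (v i) = ∑ _j ∈ Iic i, G.degree (v i) := by simp
    _ ≤ ∑ j ∈ Iic i, G.degree (v j) := sum_le_sum fun j hj => hanti (mem_Iic.1 hj)
    _ = ∑ u ∈ (Iic i).image v, G.degree u := by rw [sum_image hv.injOn]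
    _ ≤ ∑ u, G.degree u := sum_le_sum_of_subset (subset_univ _)
    _ = 2 * #G.edgeFinset := G.sum_degrees_eq_twice_card_edges

theorem disjoint_closedNbhd_iff {n : ℕ} {G : SimpleGraph (Fin n)} [DecidableRel G.Adj]
    {A B : Finset (Fin n)} :
    Disjoint A (closedNbhd G B) ↔ Disjoint A B ∧ ∀ a ∈ A, ∀ b ∈ B, ¬ G.Adj b a := by
  rw [closedNbhd, disjoint_union_right, disjoint_biUnion_right]
  simp only [disjoint_left (s := A) (t := G.neighborFinset _), SimpleGraph.mem_neighborFinset]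
  exact and_congr_right fun _ => ⟨fun h a ha b hb => h b hb ha, fun h b hb a ha => h a ha b hb⟩

theorem disjoint_closedNbhd_of_isIndepSet_iUnion {n : ℕ} {ι : Type*} {G : SimpleGraph (Fin n)}
    [DecidableRel G.Adj] {B : ι → Finset (Fin n)} (hdisj : Pairwise (Function.onFun Disjoint B))
    (hindep : G.IsIndepSet (⋃ i, (B i : Set (Fin n)))) {i j : ι} (hij : i ≠ j) :
    Disjoint (B i) (closedNbhd G (B j)) :=
  disjoint_closedNbhd_iff.2 ⟨hdisj hij, fun _ ha _ hb hab =>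
    hindep (Set.mem_iUnion_of_mem j hb) (Set.mem_iUnion_of_mem i ha) hab.ne hab⟩

theorem card_filter_one_le_succ_le_ceil_le (n : ℕ) {r : ℝ} (hr : 0 ≤ r) :
    (#{i : Fin n | 1 ≤ (i : ℕ) ∧ (i : ℕ) + 1 ≤ ⌈r⌉₊} : ℝ) ≤ r := by
  have card_le : #{i : Fin n | 1 ≤ (i : ℕ) ∧ (i : ℕ) + 1 ≤ ⌈r⌉₊} ≤ ⌈r⌉₊ - 1 := by
    rw [← Nat.card_Ico]
    exact card_le_card_of_injOn Fin.val (fun i hi => by simpa using hi) Fin.val_injective.injOn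
  have ceil_pred_le : ((⌈r⌉₊ - 1 : ℕ) : ℝ) ≤ r := by
    rw [← Nat.le_floor_iff hr]
    exact Nat.sub_le_of_le_add (Nat.ceil_le_floor_add_one r)
  exact (Nat.cast_le.2 card_le).trans ceil_pred_le

theorem div_forty_add_eleven_mul_card_mul_ceil_le {n : ℕ} (hr : 200 ≤ √(n : ℝ)) :
    (n : ℝ) / 40 + 11 *
      (#{i : Fin n | 1 ≤ (i : ℕ) ∧ (i : ℕ) + 1 ≤ ⌈√(n : ℝ) / 10⌉₊} * ⌈√(n : ℝ) / 50⌉₊) ≤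
        n / 18 := by
  have product_le : (#{i : Fin n | 1 ≤ (i : ℕ) ∧ (i : ℕ) + 1 ≤ ⌈√(n : ℝ) / 10⌉₊} : ℝ) *
      ⌈√(n : ℝ) / 50⌉₊ ≤ √n / 10 * (√n / 50 + 1) := by
    gcongr
    · exact card_filter_one_le_succ_le_ceil_le n (by positivity)
    · exact (Nat.ceil_lt_add_one (by positivity)).le
  have sq_sqrt : √(n : ℝ) ^ 2 = n := Real.sq_sqrt n.cast_nonneg
  nlinarith

theorem le_four_mul_of_two_pow_le_sq_mul_exp {r : ℝ} (hr : 200 ≤ r) {X : ℕ}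
    (hX : (2 : ℝ) ^ X ≤ r ^ 2 * Real.exp (80 * (r / 50 + 1))) : (X : ℝ) ≤ 4 * r := by
  have log_le : Real.log r ≤ r / 10 + 8 := by
    have hlog := Real.log_le_sub_one_of_pos (x := r / 10) (by positivity)
    have hlog_ten := Real.log_le_sub_one_of_pos (x := 10) (by norm_num)
    rw [Real.log_div (by positivity) (by norm_num)] at hlog
    linarith
  have log_two_pow_le : X * Real.log 2 ≤ 2 * Real.log r + 80 * (r / 50 + 1) := by
    have h := Real.log_le_log (by positivity) hX
    rwa [Real.log_mul (by positivity) (Real.exp_ne_zero _), Real.log_exp, Real.log_pow,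
      Real.log_pow, Nat.cast_ofNat] at h
  have hX_le : (X : ℝ) * 0.69 ≤ 4 * r * 0.69 :=
    calc (X : ℝ) * 0.69 ≤ X * Real.log 2 := by gcongr; linarith [Real.log_two_gt_d9]
      _ ≤ 4 * r * 0.69 := by linarith
  exact le_of_mul_le_mul_right hX_le (by norm_num)

theorem mul_mul_div_le_of_succ_mul_le {n i c m D : ℕ} (hn : 0 < n) (hc : c ≤ i)
    (hD : (i + 1) * D ≤ 2 * n) : (c : ℝ) * m * (D / (n / 40)) ≤ 80 * m := by
  have hcD : (c : ℝ) * D ≤ 2 * n :=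
    mod_cast (Nat.mul_le_mul_right D (hc.trans i.le_succ)).trans hD
  calc (c : ℝ) * m * (D / (n / 40)) = c * D * (40 * m / n) := by field_simp
    _ ≤ 2 * n * (40 * m / n) := by gcongr
    _ = 80 * m := by field_simp; ring

theorem random_subsets_lemma_general {n : ℕ} (hn : 40000 ≤ n) (G : SimpleGraph (Fin n))
    [DecidableRel G.Adj] (hE : #G.edgeFinset ≤ n) {v : Fin n → Fin n}
    (hv : Function.Injective v) (hanti : Antitone fun i => G.degree (v i))
    {S : Fin n → Finset (Fin n)}
    (hS : ∀ i : Fin n, 1 ≤ (i : ℕ) → (i : ℕ) + 1 ≤ ⌈√(n : ℝ) / 10⌉₊ →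
      (n : ℝ) / 18 ≤ #(S i) ∧ ∀ u ∈ S i, G.degree u ≤ 10) :
    ∃ B : Fin n → Finset (Fin n), (∀ i, B i ⊆ S i) ∧
      (∀ i : Fin n, 1 ≤ (i : ℕ) →
        (#(G.neighborFinset (v i) ∩ ({j | 1 ≤ (j : ℕ) ∧ j < i} : Finset (Fin n)).biUnion B) : ℝ)
          ≤ 4 * √n) ∧
      ∀ i : Fin n, 1 ≤ (i : ℕ) → (i : ℕ) + 1 ≤ ⌈√(n : ℝ) / 10⌉₊ →
        √n / 50 ≤ #(B i \ ({j | 1 ≤ (j : ℕ) ∧ j < i} : Finset (Fin n)).biUnion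
          fun j => closedNbhd G (B j)) := by
  have : NeZero n := ⟨by omega⟩
  have hr : 200 ≤ √(n : ℝ) := Real.le_sqrt_of_sq_le (by norm_num; exact_mod_cast hn)
  let m := ⌈√(n : ℝ) / 50⌉₊
  let I : Finset (Fin n) := {i | 1 ≤ (i : ℕ) ∧ (i : ℕ) + 1 ≤ ⌈√(n : ℝ) / 10⌉₊}
  let J (i : Fin n) : Finset (Fin n) := {j | 1 ≤ (j : ℕ) ∧ j < i}
  have hSI : ∀ i ∈ I, (n : ℝ) / 18 ≤ #(S i) ∧ ∀ u ∈ S i, G.degree u ≤ 10 := fun i hi =>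
    hS i (mem_filter.1 hi).2.1 (mem_filter.1 hi).2.2
  have pool_le (i : Fin n) (hi : i ∈ I) : (n : ℝ) / 40 + ((10 : ℕ) + 1) * (#I * m) ≤ #(S i) := by
    rw [(by norm_num : ((10 : ℕ) : ℝ) + 1 = 11)]
    exact (div_forty_add_eleven_mul_card_mul_ceil_le hr).trans (hSI i hi).1
  obtain ⟨B, hBS, hcard, hdisj, hindep, hhits⟩ := exists_indep_blocks_two_pow_card_inter_le G
    (by positivity : (0 : ℝ) < n / 40) (fun i hi => (hSI i hi).2) pool_le J
    (fun i => G.neighborFinset (v i))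
  refine ⟨B, hBS, fun i _ => ?_, fun i hi hiK => ?_⟩
  · have card_earlier : #(I ∩ J i) ≤ i := by
      rw [← Fin.card_Iio]
      exact card_le_card fun j hj => mem_Iio.2 (mem_filter.1 (mem_inter.1 hj).2).2.2
    have degree_le := (succ_mul_degree_le_two_mul_card_edgeFinset G hv hanti i).trans
      (Nat.mul_le_mul_left 2 hE)
    have exponent_le : (#(I ∩ J i) : ℝ) * m * (G.degree (v i) / (n / 40)) ≤
        80 * (√n / 50 + 1) :=
      (mul_mul_div_le_of_succ_mul_le (by omega) card_earlier degree_le).trans <|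
        mul_le_mul_of_nonneg_left (Nat.ceil_lt_add_one (by positivity)).le (by norm_num)
    refine le_four_mul_of_two_pow_le_sq_mul_exp hr ((hhits i).trans ?_)
    rw [Real.sq_sqrt n.cast_nonneg, Fintype.card_fin]
    exact mul_le_mul_of_nonneg_left (Real.exp_le_exp.2 exponent_le) n.cast_nonneg
  · have disjoint_earlier : ∀ j ∈ J i, Disjoint (B i) (closedNbhd G (B j)) := fun j hj =>
      disjoint_closedNbhd_of_isIndepSet_iUnion hdisj hindep (mem_filter.1 hj).2.2.ne'
    rw [sdiff_eq_self_of_disjoint ((disjoint_biUnion_right _ _ _).2 disjoint_earlier),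
      hcard i (mem_filter.2 ⟨mem_univ i, hi, hiK⟩)]
    exact Nat.le_ceil _

theorem random_subsets_lemma :
    ∃ n₀ : ℕ, ∀ n : ℕ, n₀ ≤ n → ∀ δ : ℕ, 1 ≤ δ → (δ : ℝ) ≤ Real.sqrt n / 200 →
      ∀ (G : SimpleGraph (Fin n)) [DecidableRel G.Adj],
        G.edgeFinset.card = n - δ - 1 →
        ∀ v : Fin n → Fin n, Function.Bijective v →
          (∀ i j : Fin n, i ≤ j → G.degree (v j) ≤ G.degree (v i)) →
          ∀ S : Fin n → Finset (Fin n),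
            -- for every `i` with (1-indexed) `2 ≤ i ≤ n`, i.e. 0-indexed `1 ≤ i`,
            -- `S i` is independent, disjoint from `N[v i]`, of size `≥ n/18`, with all
            -- degrees at most 10:
            (∀ i : Fin n, 1 ≤ (i : ℕ) →
              (∀ u ∈ S i, ∀ w ∈ S i, u ≠ w → ¬ G.Adj u w) ∧
              (∀ u ∈ S i, u ≠ v i ∧ ¬ G.Adj (v i) u) ∧
              (n : ℝ) / 18 ≤ (S i).card ∧
              (∀ u ∈ S i, G.degree u ≤ 10)) →
            ∃ B : Fin n → Finset (Fin n),
              (∀ i : Fin n, B i ⊆ S i) ∧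
              -- (1) `|C i| = |N(v i) ∩ (B_2 ∪ ⋯ ∪ B_{i-1})| ≤ 4√n`:
              (∀ i : Fin n, 1 ≤ (i : ℕ) →
                ((G.neighborFinset (v i) ∩
                  (Finset.univ.filter (fun j : Fin n => 1 ≤ (j : ℕ) ∧ j < i)).biUnion
                    B).card : ℝ) ≤ 4 * Real.sqrt n) ∧
              -- (2) `|D i| = |B i \ (N[B_2] ∪ ⋯ ∪ N[B_{i-1}])| ≥ √n / 50`
              -- for `2 ≤ i ≤ ⌈√n / 10⌉` (1-indexed):
              (∀ i : Fin n, 1 ≤ (i : ℕ) → (i : ℕ) + 1 ≤ ⌈Real.sqrt n / 10⌉₊ →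
                Real.sqrt n / 50 ≤
                  ((B i \ (Finset.univ.filter (fun j : Fin n => 1 ≤ (j : ℕ) ∧ j < i)).biUnion
                    (fun j => closedNbhd G (B j))).card : ℝ)) :=
  ⟨40000, fun _ hn _ _ _ G _ hE _ hv hanti _ hS => random_subsets_lemma_general hn G
    (by omega) hv.injective (fun i j => hanti i j) fun i hi _ => (hS i hi).2.2⟩
end
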